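/- Let r ≥ 3 be a real number, let n ≥ 4, let T be a triangulation of the n-gon, let e = {A,C} be a type-1 diagonal of T with Q_T(e) = ABCD, and let T' be the triangulation obtained from T by flipping e. If exactly two of the three scales σ_{AC}, σ_{BD}, σ_{BC} are equal, then c(T) ≠ c(T'). -/

import Mathlib

/-!
Flipping `AC` to `BD` inside the quadrilateral `ABCD` replaces the triangles `ABC`, `ACD` by
`ABD`, `BCD`. Besides removing a type-1 and adding a type-2 diagonal, it can only affect the types
of the four sides, and each of `AB`, `CD`, `AD` finds its new inner apex in the same position
(below, between or above its endpoints) as the old one, so keeps its type (`relType1_flip`, `relType2_flip`). The side `BC`, if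
it is a diagonal, passes from type-2 to type-1 (`types_BC`; the triangle on its other side
exists by maximality, `exists_apex`); if it is a boundary edge its scale is `0`. Hence, modulo
`3L` with `L = ⌈log_r n⌉`, the label changes by `3 σ_BD - 2 σ_AC - σ_BC` (`sum_weight_flip`).

If exactly two of these scales coincide, the change is `σ_AC - σ_BC`, `3 (σ_BD - σ_AC)` or
`2 (σ_BD - σ_AC)`, hence nonzero. All scales lie in `[0, L]`, and `σ_AC`, `σ_BD` are at least `1`
because `AC` and `BD` skip a vertex; so the absolute value of the change is less than `3L`, and it
is not divisible by `3L`.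
-/

/-- `e` is a chord of the convex `n`-gon: a 2-element subset of `{0, …, n-1}`. -/
def IsChord (n : ℕ) (e : Finset ℕ) : Prop :=
  e.card = 2 ∧ ∀ x ∈ e, x < n

/-- `e` is a boundary edge of the `n`-gon, i.e. of the form `{i, (i+1) mod n}`. -/
def IsBoundaryEdge (n : ℕ) (e : Finset ℕ) : Prop :=
  ∃ i < n, e = ({i, (i + 1) % n} : Finset ℕ)

/-- `e` is a diagonal of the `n`-gon: a chord that is not a boundary edge. -/
def IsDiagonal (n : ℕ) (e : Finset ℕ) : Prop :=
  IsChord n e ∧ ¬ IsBoundaryEdge n e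

/-- Two chords `{a,b}` (`a<b`) and `{c,d}` (`c<d`) cross if `a<c<b<d` or `c<a<d<b`. -/
def Crosses (e f : Finset ℕ) : Prop :=
  ∃ a b c d : ℕ, a < b ∧ c < d ∧ e = ({a, b} : Finset ℕ) ∧ f = ({c, d} : Finset ℕ) ∧
    ((a < c ∧ c < b ∧ b < d) ∨ (c < a ∧ a < d ∧ d < b))

/-- `T` is a triangulation of the `n`-gon: the set of all `n` boundary edges together
with a maximal set of pairwise non-crossing diagonals. -/
def IsTriangulation (n : ℕ) (T : Finset (Finset ℕ)) : Prop :=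
  (∀ e ∈ T, IsChord n e) ∧
  (∀ i < n, ({i, (i + 1) % n} : Finset ℕ) ∈ T) ∧
  (∀ e ∈ T, ∀ f ∈ T, ¬ Crosses e f) ∧
  (∀ e, IsDiagonal n e → e ∉ T → ∃ f ∈ T, Crosses e f)

/-- The scale of the chord `{U, V}` with respect to the parameter `r`:
`σ_{UV} = ⌈log_r |U - V|⌉`. -/
noncomputable def scale (r : ℝ) (U V : ℕ) : ℤ :=
  ⌈Real.log |(U : ℝ) - (V : ℝ)| / Real.log r⌉

/-- `a b c` (with `a < b < c`) is a triangle of `T`: all three sides are chords of `T`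
(in a triangulation of a convex polygon they then bound a common face). -/
def IsTriangleOf (T : Finset (Finset ℕ)) (a b c : ℕ) : Prop :=
  a < b ∧ b < c ∧ ({a, b} : Finset ℕ) ∈ T ∧ ({b, c} : Finset ℕ) ∈ T ∧
    ({a, c} : Finset ℕ) ∈ T

/-- The diagonal `e` is type-1 in `T`: its quadrilateral `Q_T(e) = abcd` (with
`a < b < c < d`) has `e = {a, c}`. -/
def IsType1 (T : Finset (Finset ℕ)) (e : Finset ℕ) : Prop :=
  ∃ a b c d : ℕ, a < b ∧ b < c ∧ c < d ∧ e = ({a, c} : Finset ℕ) ∧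
    ({a, b} : Finset ℕ) ∈ T ∧ ({b, c} : Finset ℕ) ∈ T ∧ ({c, d} : Finset ℕ) ∈ T ∧
    ({a, d} : Finset ℕ) ∈ T ∧ ({a, c} : Finset ℕ) ∈ T

/-- The diagonal `e` is type-2 in `T`: its quadrilateral `Q_T(e) = abcd` (with
`a < b < c < d`) has `e = {b, d}`. -/
def IsType2 (T : Finset (Finset ℕ)) (e : Finset ℕ) : Prop :=
  ∃ a b c d : ℕ, a < b ∧ b < c ∧ c < d ∧ e = ({b, d} : Finset ℕ) ∧
    ({a, b} : Finset ℕ) ∈ T ∧ ({b, c} : Finset ℕ) ∈ T ∧ ({c, d} : Finset ℕ) ∈ T ∧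
    ({a, d} : Finset ℕ) ∈ T ∧ ({b, d} : Finset ℕ) ∈ T

open Classical in
/-- `s¹ᵢ(T)`: the number of type-1 diagonals of `T` of scale `i`. -/
noncomputable def sCount1 (r : ℝ) (n : ℕ) (T : Finset (Finset ℕ)) (i : ℕ) : ℕ :=
  ((Finset.range n ×ˢ Finset.range n).filter
    (fun p => p.1 < p.2 ∧ IsType1 T ({p.1, p.2} : Finset ℕ) ∧
      scale r p.1 p.2 = (i : ℤ))).card

open Classical in
/-- `s²ᵢ(T)`: the number of type-2 diagonals of `T` of scale `i`. -/
noncomputable def sCount2 (r : ℝ) (n : ℕ) (T : Finset (Finset ℕ)) (i : ℕ) : ℕ :=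
  ((Finset.range n ×ˢ Finset.range n).filter
    (fun p => p.1 < p.2 ∧ IsType2 T ({p.1, p.2} : Finset ℕ) ∧
      scale r p.1 p.2 = (i : ℤ))).card

/-- The label `c(T) = (Σ_{i=0}^{⌈log_r(n-1)⌉} 2i·s¹ᵢ(T) + Σ_{i=0}^{⌈log_r(n-1)⌉} 3i·s²ᵢ(T))
mod (3⌈log_r n⌉)`. -/
noncomputable def cLabel (r : ℝ) (n : ℕ) (T : Finset (Finset ℕ)) : ℤ :=
  ((∑ i ∈ Finset.range (⌈Real.log ((n : ℝ) - 1) / Real.log r⌉₊ + 1),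
      (2 * (i : ℤ) * (sCount1 r n T i : ℤ))) +
   (∑ i ∈ Finset.range (⌈Real.log ((n : ℝ) - 1) / Real.log r⌉₊ + 1),
      (3 * (i : ℤ) * (sCount2 r n T i : ℤ)))) %
    (3 * (⌈Real.log (n : ℝ) / Real.log r⌉₊ : ℤ))

/-! ### Edge relations -/

/-- No two edges of `M` cross. An edge set is encoded as a relation `M a b`, which is only
meaningful for `a < b`. -/
def NonCrossing (M : ℕ → ℕ → Prop) : Prop :=
  ∀ a b c d : ℕ, a < c → c < b → b < d → M a b → M c d → False

/-- `p q` (with `p < q`) is the diagonal `ac` of a quadrilateral `abcd` of `M`. -/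
def RelType1 (M : ℕ → ℕ → Prop) (p q : ℕ) : Prop :=
  ∃ b d : ℕ, p < b ∧ b < q ∧ q < d ∧ M p b ∧ M b q ∧ M q d ∧ M p d ∧ M p q

/-- `p q` (with `p < q`) is the diagonal `bd` of a quadrilateral `abcd` of `M`. -/
def RelType2 (M : ℕ → ℕ → Prop) (p q : ℕ) : Prop :=
  ∃ a c : ℕ, a < p ∧ p < c ∧ c < q ∧ M a p ∧ M p c ∧ M c q ∧ M a q ∧ M p q

/-- The edge relation of a set `T` of chords. -/
def edgeRel (T : Finset (Finset ℕ)) (a b : ℕ) : Prop := ({a, b} : Finset ℕ) ∈ T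

/-- The edge relation after `{A, C}` has been replaced by `{B, D}`. -/
def flipRel (M : ℕ → ℕ → Prop) (A B C D a b : ℕ) : Prop :=
  (M a b ∧ ¬ (a = A ∧ b = C)) ∨ (a = B ∧ b = D)

lemma pair_eq_iff {a b c d : ℕ} (h : a < b) (h' : c < d) :
    ({a, b} : Finset ℕ) = {c, d} ↔ a = c ∧ b = d := by
  constructor
  · intro e
    have h1 : a ∈ ({c, d} : Finset ℕ) := e ▸ (by simp)
    have h2 : b ∈ ({c, d} : Finset ℕ) := e ▸ (by simp)
    simp only [Finset.mem_insert, Finset.mem_singleton] at h1 h2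
    omega
  · rintro ⟨rfl, rfl⟩
    rfl

lemma isType1_iff (T : Finset (Finset ℕ)) {p q : ℕ} (h : p < q) :
    IsType1 T {p, q} ↔ RelType1 (edgeRel T) p q := by
  constructor
  · rintro ⟨a, b, c, d, hab, hbc, hcd, he, h1, h2, h3, h4, h5⟩
    obtain ⟨rfl, rfl⟩ := (pair_eq_iff h (hab.trans hbc)).1 he
    exact ⟨b, d, hab, hbc, hcd, h1, h2, h3, h4, h5⟩
  · rintro ⟨b, d, hab, hbc, hcd, h1, h2, h3, h4, h5⟩
    exact ⟨p, b, q, d, hab, hbc, hcd, rfl, h1, h2, h3, h4, h5⟩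

lemma isType2_iff (T : Finset (Finset ℕ)) {p q : ℕ} (h : p < q) :
    IsType2 T {p, q} ↔ RelType2 (edgeRel T) p q := by
  constructor
  · rintro ⟨a, b, c, d, hab, hbc, hcd, he, h1, h2, h3, h4, h5⟩
    obtain ⟨rfl, rfl⟩ := (pair_eq_iff h (hbc.trans hcd)).1 he
    exact ⟨a, c, hab, hbc, hcd, h1, h2, h3, h4, h5⟩
  · rintro ⟨a, c, hab, hbc, hcd, h1, h2, h3, h4, h5⟩
    exact ⟨a, p, c, q, hab, hbc, hcd, rfl, h1, h2, h3, h4, h5⟩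

lemma edgeRel_flip (T : Finset (Finset ℕ)) {A B C D a b : ℕ} (hAC : A < C) (hBD : B < D)
    (h : a < b) :
    edgeRel (insert {B, D} (T.erase {A, C})) a b ↔ flipRel (edgeRel T) A B C D a b := by
  unfold edgeRel flipRel
  rw [Finset.mem_insert, Finset.mem_erase, ne_eq, pair_eq_iff h hAC, pair_eq_iff h hBD]
  tauto

lemma relType1_congr {M N : ℕ → ℕ → Prop} (h : ∀ a b, a < b → (M a b ↔ N a b)) {p q : ℕ} :
    RelType1 M p q ↔ RelType1 N p q := by
  unfold RelType1
  refine exists_congr fun b => exists_congr fun d => ?_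
  refine and_congr_right fun h1 => and_congr_right fun h2 => and_congr_right fun h3 => ?_
  rw [h p b h1, h b q h2, h q d h3, h p d (by omega), h p q (by omega)]

lemma relType2_congr {M N : ℕ → ℕ → Prop} (h : ∀ a b, a < b → (M a b ↔ N a b)) {p q : ℕ} :
    RelType2 M p q ↔ RelType2 N p q := by
  unfold RelType2
  refine exists_congr fun b => exists_congr fun d => ?_
  refine and_congr_right fun h1 => and_congr_right fun h2 => and_congr_right fun h3 => ?_
  rw [h b p h1, h p d h2, h d q h3, h b q (by omega), h p q (by omega)]

/-! ### Types of diagonals before and after a flip -/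

section Flip

variable {M : ℕ → ℕ → Prop} (nc : NonCrossing M) {A B C D : ℕ}
  (hAB : A < B) (hBC : B < C) (hCD : C < D)
  (mAB : M A B) (mBC : M B C) (mCD : M C D) (mAD : M A D) (mAC : M A C)

include nc hAB hBC hCD mAB mBC mCD mAD mAC

/-- Non-crossing pins down the triangles of the quadrilateral `ABCD`: the first three clauses
concern the apexes over `AC`, the last three those over `BD` (which is not an edge of `M`).
The third and sixth clauses rule out apexes lying outside the arc from `A` to `D`. -/
lemma apex_unique :
    (∀ x, C < x → M C x → M A x → x = D) ∧
    (∀ x, A < x → x < C → M A x → M x C → x = B) ∧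
    (∀ x, x < A → ¬ M x C) ∧
    (∀ x, x < B → M x B → M x D → x = A) ∧
    (∀ x, B < x → x < D → M B x → M x D → x = C) ∧
    (∀ x, D < x → ¬ M B x) := by
  refine ⟨?_, ?_, ?_, ?_, ?_, ?_⟩
  · intro x hx m1 m2
    rcases lt_trichotomy x D with h | h | h
    · exact (nc A x C D (by omega) hx h m2 mCD).elim
    · exact h
    · exact (nc A D C x (by omega) hCD h mAD m1).elim
  · intro x h1 h2 m1 m2
    rcases lt_trichotomy x B with h | h | h
    · exact (nc A B x C h1 h hBC mAB m2).elim
    · exact h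
    · exact (nc A x B C hAB h h2 m1 mBC).elim
  · exact fun x h m => nc x C A D h (by omega) hCD m mAD
  · intro x hx m1 m2
    rcases lt_trichotomy x A with h | h | h
    · exact (nc x B A D h hAB (by omega) m1 mAD).elim
    · exact h
    · exact (nc A B x D h hx (by omega) mAB m2).elim
  · intro x h1 h2 m1 m2
    rcases lt_trichotomy x C with h | h | h
    · exact (nc B C x D h1 h hCD mBC m2).elim
    · exact h
    · exact (nc A C B x hAB hBC h mAC m1).elim
  · exact fun x h m => nc A D B x hAB (by omega) h mAD m

/-- A diagonal other than `AC`, `BD`, `BC` keeps its type-1 status. Its quadrilateral survives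
the flip unless it uses the edge `AC` or `BD`, and then the edge is `AB` or `AD`, whose inner
triangle changes without changing the type. -/
lemma relType1_flip {p q : ℕ} (h1 : ¬ (p = A ∧ q = C)) (h2 : ¬ (p = B ∧ q = D))
    (h3 : ¬ (p = B ∧ q = C)) :
    RelType1 (flipRel M A B C D) p q ↔ RelType1 M p q := by
  obtain ⟨u1, u2, u3, v1, v2, v3⟩ := apex_unique nc hAB hBC hCD mAB mBC mCD mAD mAC
  constructor
  · rintro ⟨b, d, l1, l2, l3, m1, m2, m3, m4, m5⟩
    simp only [flipRel] at m1 m2 m3 m4 m5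
    by_cases e1 : b = B ∧ q = D
    · obtain ⟨rfl, rfl⟩ := e1
      obtain rfl := v1 p (by omega) (by grind) (by grind)
      exact ⟨C, d, by omega, hCD, l3, mAC, mCD, by grind, by grind, mAD⟩
    by_cases e2 : q = B ∧ d = D
    · obtain ⟨rfl, rfl⟩ := e2
      obtain rfl := v1 p (by omega) (by grind) (by grind)
      exact ⟨b, C, l1, l2, hBC, by grind, by grind, mBC, mAC, mAB⟩
    exact ⟨b, d, l1, l2, l3, by grind, by grind, by grind, by grind, by grind⟩
  · rintro ⟨b, d, l1, l2, l3, m1, m2, m3, m4, m5⟩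
    simp only [RelType1, flipRel]
    by_cases e1 : p = A ∧ b = C
    · obtain ⟨rfl, rfl⟩ := e1
      obtain rfl := u1 q (by omega) (by grind) (by grind)
      exact ⟨B, d, by omega, by omega, l3, by grind, by grind, by grind, by grind, by grind⟩
    by_cases e2 : p = A ∧ d = C
    · obtain ⟨rfl, rfl⟩ := e2
      obtain rfl := u2 q (by omega) (by omega) (by grind) (by grind)
      exact ⟨b, D, l1, l2, by omega, by grind, by grind, by grind, by grind, by grind⟩
    exact ⟨b, d, l1, l2, l3, by grind, by grind, by grind, by grind, by grind⟩

/-- A diagonal other than `AC`, `BD`, `BC` keeps its type-2 status; the edges whose inner triangle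
changes are here `CD` and `AD`. -/
lemma relType2_flip {p q : ℕ} (h1 : ¬ (p = A ∧ q = C)) (h2 : ¬ (p = B ∧ q = D))
    (h3 : ¬ (p = B ∧ q = C)) :
    RelType2 (flipRel M A B C D) p q ↔ RelType2 M p q := by
  obtain ⟨u1, u2, u3, v1, v2, v3⟩ := apex_unique nc hAB hBC hCD mAB mBC mCD mAD mAC
  constructor
  · rintro ⟨a, c, l1, l2, l3, m1, m2, m3, m4, m5⟩
    simp only [flipRel] at m1 m2 m3 m4 m5
    by_cases e1 : c = B ∧ q = D
    · obtain ⟨rfl, rfl⟩ := e1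
      obtain rfl := v1 p (by omega) (by grind) (by grind)
      exact ⟨a, C, l1, by omega, hCD, by grind, mAC, mCD, by grind, mAD⟩
    by_cases e2 : a = B ∧ q = D
    · obtain ⟨rfl, rfl⟩ := e2
      obtain rfl := v2 p (by omega) (by omega) (by grind) (by grind)
      exact ⟨A, c, by omega, l2, l3, mAC, by grind, by grind, mAD, mCD⟩
    exact ⟨a, c, l1, l2, l3, by grind, by grind, by grind, by grind, by grind⟩
  · rintro ⟨a, c, l1, l2, l3, m1, m2, m3, m4, m5⟩
    simp only [RelType2, flipRel]
    by_cases e1 : a = A ∧ p = C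
    · obtain ⟨rfl, rfl⟩ := e1
      obtain rfl := u1 q (by omega) (by grind) (by grind)
      exact ⟨B, c, by omega, l2, l3, by grind, by grind, by grind, by grind, by grind⟩
    by_cases e2 : p = A ∧ c = C
    · obtain ⟨rfl, rfl⟩ := e2
      obtain rfl := u1 q (by omega) (by grind) (by grind)
      exact ⟨a, B, l1, by omega, by omega, by grind, by grind, by grind, by grind, by grind⟩
    exact ⟨a, c, l1, l2, l3, by grind, by grind, by grind, by grind, by grind⟩

lemma types_AC : RelType1 M A C ∧ ¬ RelType2 M A C ∧
    ¬ RelType1 (flipRel M A B C D) A C ∧ ¬ RelType2 (flipRel M A B C D) A C := by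
  refine ⟨⟨B, D, hAB, hBC, hCD, mAB, mBC, mCD, mAD, mAC⟩, ?_, ?_, ?_⟩
  · rintro ⟨a, c, h1, h2, h3, m1, m2, m3, m4, m5⟩
    exact nc a C A D h1 (by omega) hCD m4 mAD
  · rintro ⟨b, d, h1, h2, h3, m1, m2, m3, m4, m5⟩
    unfold flipRel at m5
    omega
  · rintro ⟨b, d, h1, h2, h3, m1, m2, m3, m4, m5⟩
    unfold flipRel at m5
    omega

lemma types_BD : ¬ RelType1 M B D ∧ ¬ RelType2 M B D ∧
    ¬ RelType1 (flipRel M A B C D) B D ∧ RelType2 (flipRel M A B C D) B D := by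
  refine ⟨?_, ?_, ?_, ?_⟩
  · rintro ⟨b, d, h1, h2, h3, m1, m2, m3, m4, m5⟩
    exact nc A C B D hAB hBC hCD mAC m5
  · rintro ⟨b, d, h1, h2, h3, m1, m2, m3, m4, m5⟩
    exact nc A C B D hAB hBC hCD mAC m5
  · rintro ⟨b, d, h1, h2, h3, m1, m2, m3, m4, m5⟩
    rcases m4 with m4 | m4
    · exact nc A D B d hAB (by omega) h3 mAD m4.1
    · omega
  · refine ⟨A, C, hAB, hBC, hCD, .inl ⟨mAB, by omega⟩, .inl ⟨mBC, by omega⟩,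
      .inl ⟨mCD, by omega⟩, .inl ⟨mAD, by omega⟩, .inr ⟨rfl, rfl⟩⟩

/-- When `BC` is a diagonal, i.e. has an apex `X` between `B` and `C`, the flip turns it from type-2 (with
quadrilateral `ABXC`) into type-1 (with quadrilateral `BXCD`). -/
lemma types_BC {X : ℕ} (hBX : B < X) (hXC : X < C) (mBX : M B X) (mXC : M X C) :
    ¬ RelType1 M B C ∧ RelType2 M B C ∧
    RelType1 (flipRel M A B C D) B C ∧ ¬ RelType2 (flipRel M A B C D) B C := by
  refine ⟨?_, ⟨A, X, hAB, hBX, hXC, mAB, mBX, mXC, mAC, mBC⟩, ?_, ?_⟩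
  · rintro ⟨b, d, h1, h2, h3, m1, m2, m3, m4, m5⟩
    exact nc A C B d hAB hBC h3 mAC m4
  · exact ⟨X, D, hBX, hXC, hCD, .inl ⟨mBX, by omega⟩, .inl ⟨mXC, by omega⟩,
      .inl ⟨mCD, by omega⟩, .inr ⟨rfl, rfl⟩, .inl ⟨mBC, by omega⟩⟩
  · rintro ⟨a, c, h1, h2, h3, m1, m2, m3, m4, m5⟩
    rcases m4 with ⟨m4, hne⟩ | m4
    · rcases lt_trichotomy a A with h | h | h
      · exact nc a C A D h (by omega) hCD m4 mAD
      · exact hne ⟨h, rfl⟩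
      · exact nc A B a C h h1 hBC mAB m4
    · omega

end Flip

/-! ### Triangles of a triangulation -/

lemma nonCrossing_of_isTriangulation {n : ℕ} {T : Finset (Finset ℕ)} (hT : IsTriangulation n T) :
    NonCrossing (edgeRel T) := fun a b c d h1 h2 h3 m1 m2 =>
  hT.2.2.1 _ m1 _ m2 ⟨a, b, c, d, by omega, by omega, rfl, rfl, .inl ⟨h1, h2, h3⟩⟩

/-- Every non-boundary edge `BC` of a triangulation bounds a triangle on the side of the vertices
between `B` and `C`. Its apex is the largest `X` in between with `BX` an edge: by maximality of the
triangulation, a missing `XC` would be crossed by an edge, which can only be `BY` with `X < Y`. -/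
lemma exists_apex {n : ℕ} {T : Finset (Finset ℕ)} (hT : IsTriangulation n T) {B C : ℕ}
    (hBC : B + 1 < C) (hC : C < n) (mBC : edgeRel T B C) :
    ∃ X, B < X ∧ X < C ∧ edgeRel T B X ∧ edgeRel T X C := by
  classical
  have nc := nonCrossing_of_isTriangulation hT
  have hedge : ∀ i, i + 1 < n → edgeRel T i (i + 1) := by
    intro i hi
    have := hT.2.1 i (by omega)
    rwa [Nat.mod_eq_of_lt hi] at this
  let S := (Finset.Ioo B C).filter (edgeRel T B)
  have hS : S.Nonempty := ⟨B + 1, by simp [S, hBC, hedge B (by omega)]⟩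
  obtain ⟨X, hX, hmax⟩ := S.exists_max_image id hS
  simp only [S, Finset.mem_filter, Finset.mem_Ioo, id] at hX hmax
  refine ⟨X, hX.1.1, hX.1.2, hX.2, ?_⟩
  by_contra hXC
  have hne : C ≠ X + 1 := by
    rintro rfl
    exact hXC (hedge X hC)
  have hdiag : IsDiagonal n {X, C} := by
    refine ⟨⟨Finset.card_pair (by omega), by simp; omega⟩, ?_⟩
    rintro ⟨i, hi, he⟩
    rcases Nat.lt_or_ge (i + 1) n with h | h
    · rw [Nat.mod_eq_of_lt h, pair_eq_iff hX.1.2 (by omega)] at he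
      omega
    -- The wrap-around edge `{0, n - 1}` is excluded because `B < X`.
    · have : i + 1 = n := by omega
      rw [this, Nat.mod_self, Finset.pair_comm i, pair_eq_iff hX.1.2 (by omega)] at he
      omega
  obtain ⟨f, hf, a, b, c, d, hab, hcd, he, rfl, h⟩ := hT.2.2.2 _ hdiag hXC
  obtain ⟨rfl, rfl⟩ := (pair_eq_iff hX.1.2 hab).1 he
  change edgeRel T c d at hf
  rcases h with h | h
  · exact nc B C c d (by omega) (by omega) (by omega) mBC hf
  · rcases lt_trichotomy c B with h' | rfl | h'
    · exact nc c d B C h' (by omega) (by omega) hf mBC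
    · have := hmax d ⟨by omega, hf⟩
      omega
    · exact nc B X c d h' (by omega) (by omega) hX.2 hf

/-! ### The label as a sum over pairs -/

open Classical in
/-- Sorting by scale: a sum over scales of scale times count is a sum over the objects. -/
lemma sum_mul_card_fiber {α : Type*} (S : Finset α) (P : α → Prop) (s : α → ℤ) (K : ℕ) (k : ℤ)
    (hs : ∀ p ∈ S, P p → 0 ≤ s p ∧ s p ≤ K) :
    ∑ i ∈ Finset.range (K + 1), k * (i : ℤ) * ((S.filter (fun p => P p ∧ s p = (i : ℤ))).card : ℤ) =
      ∑ p ∈ S, if P p then k * s p else 0 := by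
  simp only [Finset.card_filter, Nat.cast_sum, Finset.mul_sum]
  rw [Finset.sum_comm]
  refine Finset.sum_congr rfl fun p hp => ?_
  by_cases hP : P p
  · obtain ⟨h0, h1⟩ := hs p hp hP
    rw [Finset.sum_eq_single (s p).toNat]
    · simp [hP, h0]
    · intro i _ hi
      have : ¬ s p = i := by omega
      simp [this]
    · intro h
      simp at h
      omega
  · simp [hP]

lemma scale_nonneg {r : ℝ} (hr : 3 ≤ r) {p q : ℕ} (h : p < q) : 0 ≤ scale r p q := by
  have h1 : (1 : ℝ) ≤ |(p : ℝ) - q| := by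
    have : (p : ℝ) + 1 ≤ q := by exact_mod_cast h
    rw [abs_sub_comm]
    exact le_trans (by linarith) (le_abs_self _)
  exact Int.ceil_nonneg (div_nonneg (Real.log_nonneg h1) (Real.log_nonneg (by linarith)))

lemma scale_pos {r : ℝ} (hr : 3 ≤ r) {p q : ℕ} (h : p + 1 < q) : 0 < scale r p q := by
  have h1 : (1 : ℝ) < |(p : ℝ) - q| := by
    have : (p : ℝ) + 1 < q := by exact_mod_cast h
    rw [abs_sub_comm]
    exact lt_of_lt_of_le (by linarith) (le_abs_self _)
  exact Int.ceil_pos.2 (div_pos (Real.log_pos h1) (Real.log_pos (by linarith)))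

lemma scale_succ (r : ℝ) (p : ℕ) : scale r p (p + 1) = 0 := by
  simp [scale]

lemma scale_le {r : ℝ} (hr : 3 ≤ r) {p q : ℕ} (h : p < q) {x : ℝ} (hx : (q : ℝ) - p ≤ x) :
    scale r p q ≤ (⌈Real.log x / Real.log r⌉₊ : ℤ) := by
  have h1 : (p : ℝ) + 1 ≤ q := by exact_mod_cast h
  have h2 : Real.log |(p : ℝ) - q| / Real.log r ≤ Real.log x / Real.log r := by
    rw [abs_sub_comm, abs_of_pos (by linarith)]
    exact div_le_div_of_nonneg_right (Real.log_le_log (by linarith) hx)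
      (Real.log_nonneg (by linarith))
  refine Int.ceil_le.2 (h2.trans ?_)
  exact_mod_cast Nat.le_ceil _

open Classical in
/-- The contribution of the pair `p` to the label: twice its scale if it is type-1, plus three times
its scale if it is type-2; pairs not listed in increasing order contribute nothing. -/
noncomputable def weight (r : ℝ) (T : Finset (Finset ℕ)) (p : ℕ × ℕ) : ℤ :=
  (if p.1 < p.2 ∧ IsType1 T {p.1, p.2} then 2 * scale r p.1 p.2 else 0) +
    (if p.1 < p.2 ∧ IsType2 T {p.1, p.2} then 3 * scale r p.1 p.2 else 0)

lemma cLabel_eq {r : ℝ} (hr : 3 ≤ r) (n : ℕ) (T : Finset (Finset ℕ)) :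
    cLabel r n T = (∑ p ∈ Finset.range n ×ˢ Finset.range n, weight r T p) %
      (3 * (⌈Real.log (n : ℝ) / Real.log r⌉₊ : ℤ)) := by
  classical
  have hb : ∀ p ∈ Finset.range n ×ˢ Finset.range n, p.1 < p.2 →
      0 ≤ scale r p.1 p.2 ∧
        scale r p.1 p.2 ≤ (⌈Real.log ((n : ℝ) - 1) / Real.log r⌉₊ : ℤ) := by
    intro p hp h
    simp only [Finset.mem_product, Finset.mem_range] at hp
    refine ⟨scale_nonneg hr h, scale_le hr h ?_⟩
    have h1 : (p.2 : ℝ) + 1 ≤ n := by exact_mod_cast hp.2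
    have h2 : (0 : ℝ) ≤ p.1 := Nat.cast_nonneg _
    linarith
  unfold cLabel sCount1 sCount2 weight
  rw [Finset.sum_add_distrib]
  refine congrArg (· % _) (congrArg₂ (· + ·) ?_ ?_)
  · simp only [← and_assoc]
    convert sum_mul_card_fiber _ (fun p : ℕ × ℕ => p.1 < p.2 ∧ IsType1 T {p.1, p.2})
      (fun p => scale r p.1 p.2) _ _ (fun p hp h => hb p hp h.1)
  · simp only [← and_assoc]
    convert sum_mul_card_fiber _ (fun p : ℕ × ℕ => p.1 < p.2 ∧ IsType2 T {p.1, p.2})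
      (fun p => scale r p.1 p.2) _ _ (fun p hp h => hb p hp h.1)

/-- The flip loses `2 σ_AC`, gains `3 σ_BD`, and moves `BC` from type-2 to type-1. If `BC` is a
boundary edge the last change is absent, but then its scale is `0`. -/
lemma sum_weight_flip {r : ℝ} {n : ℕ}
    {T : Finset (Finset ℕ)} (hT : IsTriangulation n T)
    {A B C D : ℕ} (hAB : A < B) (hBC : B < C) (hCD : C < D) (hD : D < n)
    (hABm : edgeRel T A B) (hBCm : edgeRel T B C) (hCDm : edgeRel T C D)
    (hADm : edgeRel T A D) (hACm : edgeRel T A C) :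
    ∑ p ∈ Finset.range n ×ˢ Finset.range n, weight r (insert {B, D} (T.erase {A, C})) p -
      ∑ p ∈ Finset.range n ×ˢ Finset.range n, weight r T p =
    3 * scale r B D - 2 * scale r A C - scale r B C := by
  classical
  have nc := nonCrossing_of_isTriangulation hT
  have hE : ∀ a b, a < b → (edgeRel (insert {B, D} (T.erase {A, C})) a b ↔
      flipRel (edgeRel T) A B C D a b) :=
    fun a b h => edgeRel_flip T (hAB.trans hBC) (hBC.trans hCD) h
  have hw : ∀ p q : ℕ, p < q → weight r T (p, q) =
      (if RelType1 (edgeRel T) p q then 2 * scale r p q else 0) +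
      (if RelType2 (edgeRel T) p q then 3 * scale r p q else 0) := by
    intro p q h
    simp only [weight, h, true_and, isType1_iff T h, isType2_iff T h]
  have hw' : ∀ p q : ℕ, p < q → weight r (insert {B, D} (T.erase {A, C})) (p, q) =
      (if RelType1 (flipRel (edgeRel T) A B C D) p q then 2 * scale r p q else 0) +
      (if RelType2 (flipRel (edgeRel T) A B C D) p q then 3 * scale r p q else 0) := by
    intro p q h
    simp only [weight, h, true_and, isType1_iff _ h, isType2_iff _ h, relType1_congr hE,
      relType2_congr hE]
  rw [← Finset.sum_sub_distrib]
  have hsub : ({(A, C), (B, D), (B, C)} : Finset (ℕ × ℕ)) ⊆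
      Finset.range n ×ˢ Finset.range n := by
    intro p hp
    simp only [Finset.mem_insert, Finset.mem_singleton] at hp
    simp only [Finset.mem_product, Finset.mem_range]
    rcases hp with rfl | rfl | rfl <;> constructor <;> dsimp only <;> omega
  rw [← Finset.sum_subset hsub]
  · rw [Finset.sum_insert (by simp; omega), Finset.sum_insert (by simp; omega),
      Finset.sum_singleton, hw _ _ (hAB.trans hBC), hw _ _ (hBC.trans hCD), hw _ _ hBC,
      hw' _ _ (hAB.trans hBC), hw' _ _ (hBC.trans hCD), hw' _ _ hBC]
    obtain ⟨a1, a2, a3, a4⟩ := types_AC nc hAB hBC hCD hABm hBCm hCDm hADm hACm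
    obtain ⟨b1, b2, b3, b4⟩ := types_BD nc hAB hBC hCD hABm hBCm hCDm hADm hACm
    simp only [a1, a2, a3, a4, b1, b2, b3, b4, if_true, if_false]
    rcases Nat.lt_or_ge (B + 1) C with h | h
    · obtain ⟨X, hBX, hXC, mBX, mXC⟩ := exists_apex hT h (hCD.trans hD) hBCm
      obtain ⟨c1, c2, c3, c4⟩ :=
        types_BC nc hAB hBC hCD hABm hBCm hCDm hADm hACm hBX hXC mBX mXC
      simp only [c1, c2, c3, c4, if_true, if_false]
      ring
    · obtain rfl : C = B + 1 := by omega
      simp only [scale_succ, mul_zero, ite_self]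
      ring
  · rintro ⟨p, q⟩ _ hp
    simp only [Finset.mem_insert, Finset.mem_singleton, Prod.mk.injEq, not_or] at hp
    rcases Nat.lt_or_ge p q with h | h
    · rw [hw _ _ h, hw' _ _ h,
        relType1_flip nc hAB hBC hCD hABm hBCm hCDm hADm hACm hp.1 hp.2.1 hp.2.2,
        relType2_flip nc hAB hBC hCD hABm hBCm hCDm hADm hACm hp.1 hp.2.1 hp.2.2, sub_self]
    · simp [weight, Nat.not_lt.2 h]

/-- Proposition 3: if exactly two of the scales `σ_{AC}`, `σ_{BD}`, `σ_{BC}` are equal,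
then flipping the type-1 diagonal `{A, C}` (with quadrilateral `ABCD`) changes the
label `c(T)`. -/
theorem cLabel_ne_of_two_scales_equal
    (r : ℝ) (hr : 3 ≤ r) (n : ℕ) (hn : 4 ≤ n)
    (T : Finset (Finset ℕ)) (hT : IsTriangulation n T)
    (A B C D : ℕ) (hAB : A < B) (hBC : B < C) (hCD : C < D) (hD : D < n)
    (hABm : ({A, B} : Finset ℕ) ∈ T) (hBCm : ({B, C} : Finset ℕ) ∈ T)
    (hCDm : ({C, D} : Finset ℕ) ∈ T) (hADm : ({A, D} : Finset ℕ) ∈ T)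
    (hACm : ({A, C} : Finset ℕ) ∈ T)
    (htwo : (scale r A C = scale r B D ∧ scale r B C ≠ scale r A C) ∨
            (scale r A C = scale r B C ∧ scale r B D ≠ scale r A C) ∨
            (scale r B D = scale r B C ∧ scale r A C ≠ scale r B D)) :
    cLabel r n T ≠
      cLabel r n (insert ({B, D} : Finset ℕ) (T.erase ({A, C} : Finset ℕ))) := by
  have key := sum_weight_flip (r := r) hT hAB hBC hCD hD hABm hBCm hCDm hADm hACm
  have hn0 : ∀ p q : ℕ, p < q → q < n → (q : ℝ) - p ≤ n := by
    intro p q _ hq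
    have h1 : (q : ℝ) ≤ n := by exact_mod_cast hq.le
    have h2 : (0 : ℝ) ≤ p := Nat.cast_nonneg _
    linarith
  -- Both `AC` and `BD` skip a vertex, so their scales are at least `1`; this is what keeps
  -- `|σ_BD - σ_AC|` strictly below `⌈log_r n⌉` when `σ_AC = σ_BC`.
  have ac0 := scale_pos hr (show A + 1 < C by omega)
  have bd0 := scale_pos hr (show B + 1 < D by omega)
  have bc0 := scale_nonneg hr hBC
  have ac1 := scale_le hr (hAB.trans hBC) (hn0 A C (by omega) (by omega))
  have bd1 := scale_le hr (hBC.trans hCD) (hn0 B D (by omega) (by omega))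
  have bc1 := scale_le hr hBC (hn0 B C (by omega) (by omega))
  rw [cLabel_eq hr, cLabel_eq hr]
  intro heq
  have hdvd := Int.ModEq.dvd heq
  rw [key] at hdvd
  have hzero := Int.eq_zero_of_abs_lt_dvd hdvd (by rw [abs_lt]; omega)
  omega
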